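/- In the category of nilpotent representations of the quiver with potential (Q, W): there is a non-split short exact sequence 0 → M(a₁b₂) → M(a₂b₁c₂a₁b₂) → M(a₂b₁) → 0, and a non-split short exact sequence 0 → M(a₂b₁) → M(a₁b₂c₁a₂b₁) → M(a₁b₂) → 0. Moreover the Yoneda extension groups Ext¹(M(a₂b₁), M(a₁b₂)) and Ext¹(M(a₁b₂), M(a₂b₁)) are each one-dimensional over ℂ; consequently every non-split extension in either direction has middle term isomorphic to the displayed string module. -/

import Mathlib

/-!
# Statement 4

Work over `ℂ`.  Let `Q` be the quiver with vertices `A, B, C` and arrows `a₁, a₂ : A → B`,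
`b₁, b₂ : B → C`, `c₁, c₂ : C → A`, with potential `W = a₁b₁c₁ + a₂b₂c₂`.  In the category
of nilpotent representations of `(Q, W)`: there is a non-split short exact sequence
`0 → M(a₁b₂) → M(a₂b₁c₂a₁b₂) → M(a₂b₁) → 0`, and a non-split short exact sequence
`0 → M(a₂b₁) → M(a₁b₂c₁a₂b₁) → M(a₁b₂) → 0`.  Moreover the Yoneda extension groups
`Ext¹(M(a₂b₁), M(a₁b₂))` and `Ext¹(M(a₁b₂), M(a₂b₁))` are each one-dimensional over `ℂ`;
consequently every non-split extension in either direction has middle term isomorphic to the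
displayed string module.

One-dimensionality of the Yoneda `Ext¹` is expressed without constructing the Baer-sum
structure: a class is nonzero iff its short exact sequences are non-split, and for `λ ≠ 0`
the class `λ·[ξ₁]` is represented by `(E₁, i₁ ∘ (λ⁻¹ • id), p₁)`; hence `[ξ₂] = λ·[ξ₁]` iff
there is an isomorphism `e : E₁ ≅ E₂` of representations with `e ∘ i₁ = i₂ ∘ (λ • id)` and
`p₂ ∘ e = p₁`.  A vector space is one-dimensional iff it has a nonzero vector and any two
nonzero vectors are proportional by a nonzero scalar.
-/

noncomputable section
open Module

/-- A representation of the quiver `Q` (vertices `A, B, C`; arrows `a₁, a₂ : A → B`,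
`b₁, b₂ : B → C`, `c₁, c₂ : C → A`) satisfying the Jacobian relations of the potential
`W = a₁b₁c₁ + a₂b₂c₂`. -/
structure Rep3 where
  VA : Type
  VB : Type
  VC : Type
  [acgA : AddCommGroup VA]
  [acgB : AddCommGroup VB]
  [acgC : AddCommGroup VC]
  [modA : Module ℂ VA]
  [modB : Module ℂ VB]
  [modC : Module ℂ VC]
  [fdA : FiniteDimensional ℂ VA]
  [fdB : FiniteDimensional ℂ VB]
  [fdC : FiniteDimensional ℂ VC]
  fa1 : VA →ₗ[ℂ] VB
  fa2 : VA →ₗ[ℂ] VB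
  fb1 : VB →ₗ[ℂ] VC
  fb2 : VB →ₗ[ℂ] VC
  fc1 : VC →ₗ[ℂ] VA
  fc2 : VC →ₗ[ℂ] VA
  rel_ba1 : fb1 ∘ₗ fa1 = 0
  rel_cb1 : fc1 ∘ₗ fb1 = 0
  rel_ac1 : fa1 ∘ₗ fc1 = 0
  rel_ba2 : fb2 ∘ₗ fa2 = 0
  rel_cb2 : fc2 ∘ₗ fb2 = 0
  rel_ac2 : fa2 ∘ₗ fc2 = 0

attribute [instance] Rep3.acgA Rep3.acgB Rep3.acgC Rep3.modA Rep3.modB Rep3.modC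
  Rep3.fdA Rep3.fdB Rep3.fdC

/-- The six arrows of the quiver. -/
inductive Arrow3 | a1 | a2 | b1 | b2 | c1 | c2
deriving DecidableEq

namespace Rep3

/-- The dimension vector `(dim V_A, dim V_B, dim V_C)`. -/
def dimVec (M : Rep3) : ℕ × ℕ × ℕ := (finrank ℂ M.VA, finrank ℂ M.VB, finrank ℂ M.VC)

/-- The total space `V_A × V_B × V_C` of a representation. -/
abbrev Tot (M : Rep3) : Type := M.VA × M.VB × M.VC

/-- The endomorphism of the total space `V_A × V_B × V_C` induced by one of the six
structure maps (extended by zero on the other components). -/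
def toEnd (M : Rep3) : Arrow3 → (M.Tot →ₗ[ℂ] M.Tot)
  | .a1 => LinearMap.prod 0 (LinearMap.prod (M.fa1 ∘ₗ LinearMap.fst ℂ M.VA (M.VB × M.VC)) 0)
  | .a2 => LinearMap.prod 0 (LinearMap.prod (M.fa2 ∘ₗ LinearMap.fst ℂ M.VA (M.VB × M.VC)) 0)
  | .b1 => LinearMap.prod 0 (LinearMap.prod 0
      (M.fb1 ∘ₗ LinearMap.fst ℂ M.VB M.VC ∘ₗ LinearMap.snd ℂ M.VA (M.VB × M.VC)))
  | .b2 => LinearMap.prod 0 (LinearMap.prod 0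
      (M.fb2 ∘ₗ LinearMap.fst ℂ M.VB M.VC ∘ₗ LinearMap.snd ℂ M.VA (M.VB × M.VC)))
  | .c1 => LinearMap.prod
      (M.fc1 ∘ₗ LinearMap.snd ℂ M.VB M.VC ∘ₗ LinearMap.snd ℂ M.VA (M.VB × M.VC)) 0
  | .c2 => LinearMap.prod
      (M.fc2 ∘ₗ LinearMap.snd ℂ M.VB M.VC ∘ₗ LinearMap.snd ℂ M.VA (M.VB × M.VC)) 0

/-- A representation is nilpotent if there is `N` such that every composite of `N` of the
six structure maps is zero.  (Composites are taken inside the endomorphisms of the total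
space `V_A × V_B × V_C`; non-composable composites vanish automatically there, so this is
equivalent to the vanishing of all composable composites of length `N`.) -/
def IsNilpotentRep (M : Rep3) : Prop :=
  ∃ N : ℕ, ∀ l : List Arrow3, l.length = N → (l.map M.toEnd).prod = 0

end Rep3

/-- Isomorphism of representations. -/
def RepIso3 (M N : Rep3) : Prop :=
  ∃ (eA : M.VA ≃ₗ[ℂ] N.VA) (eB : M.VB ≃ₗ[ℂ] N.VB) (eC : M.VC ≃ₗ[ℂ] N.VC),
    (∀ x, eB (M.fa1 x) = N.fa1 (eA x)) ∧ (∀ x, eB (M.fa2 x) = N.fa2 (eA x)) ∧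
    (∀ y, eC (M.fb1 y) = N.fb1 (eB y)) ∧ (∀ y, eC (M.fb2 y) = N.fb2 (eB y)) ∧
    (∀ z, eA (M.fc1 z) = N.fc1 (eC z)) ∧ (∀ z, eA (M.fc2 z) = N.fc2 (eC z))


/-- A morphism of representations: a triple of linear maps commuting with the six structure
maps. -/
structure Hom3 (M N : Rep3) where
  gA : M.VA →ₗ[ℂ] N.VA
  gB : M.VB →ₗ[ℂ] N.VB
  gC : M.VC →ₗ[ℂ] N.VC
  comm_a1 : ∀ x, gB (M.fa1 x) = N.fa1 (gA x)
  comm_a2 : ∀ x, gB (M.fa2 x) = N.fa2 (gA x)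
  comm_b1 : ∀ y, gC (M.fb1 y) = N.fb1 (gB y)
  comm_b2 : ∀ y, gC (M.fb2 y) = N.fb2 (gB y)
  comm_c1 : ∀ z, gA (M.fc1 z) = N.fc1 (gC z)
  comm_c2 : ∀ z, gA (M.fc2 z) = N.fc2 (gC z)

/-- A (componentwise) short exact sequence `0 → Y → E → X → 0` in the category of
*nilpotent* representations. -/
structure SES3 (Y X : Rep3) where
  E : Rep3
  nilE : Rep3.IsNilpotentRep E
  i : Hom3 Y E
  p : Hom3 E X
  injA : Function.Injective i.gA
  injB : Function.Injective i.gB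
  injC : Function.Injective i.gC
  surjA : Function.Surjective p.gA
  surjB : Function.Surjective p.gB
  surjC : Function.Surjective p.gC
  exactA : LinearMap.range i.gA = LinearMap.ker p.gA
  exactB : LinearMap.range i.gB = LinearMap.ker p.gB
  exactC : LinearMap.range i.gC = LinearMap.ker p.gC

/-- A short exact sequence `0 → Y → E → X → 0` splits if the projection admits a section
which is a morphism of representations. -/
def SES3.IsSplit {Y X : Rep3} (ξ : SES3 Y X) : Prop :=
  ∃ s : Hom3 X ξ.E,
    (∀ x, ξ.p.gA (s.gA x) = x) ∧ (∀ x, ξ.p.gB (s.gB x) = x) ∧ (∀ x, ξ.p.gC (s.gC x) = x)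

/-- `ScaledEquiv3 lam ξ₁ ξ₂` says that the Yoneda class of `ξ₂` equals `lam` times the
Yoneda class of `ξ₁`: there is an isomorphism of representations `e : E₁ ≅ E₂` such that
`e(i₁ y) = i₂ (lam • y)` and `p₂ ∘ e = p₁`. -/
def ScaledEquiv3 {Y X : Rep3} (lam : ℂ) (ξ₁ ξ₂ : SES3 Y X) : Prop :=
  ∃ (eA : ξ₁.E.VA ≃ₗ[ℂ] ξ₂.E.VA) (eB : ξ₁.E.VB ≃ₗ[ℂ] ξ₂.E.VB) (eC : ξ₁.E.VC ≃ₗ[ℂ] ξ₂.E.VC),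
    (∀ x, eB (ξ₁.E.fa1 x) = ξ₂.E.fa1 (eA x)) ∧ (∀ x, eB (ξ₁.E.fa2 x) = ξ₂.E.fa2 (eA x)) ∧
    (∀ y, eC (ξ₁.E.fb1 y) = ξ₂.E.fb1 (eB y)) ∧ (∀ y, eC (ξ₁.E.fb2 y) = ξ₂.E.fb2 (eB y)) ∧
    (∀ z, eA (ξ₁.E.fc1 z) = ξ₂.E.fc1 (eC z)) ∧ (∀ z, eA (ξ₁.E.fc2 z) = ξ₂.E.fc2 (eC z)) ∧
    (∀ y, eA (ξ₁.i.gA y) = ξ₂.i.gA (lam • y)) ∧ (∀ y, eB (ξ₁.i.gB y) = ξ₂.i.gB (lam • y)) ∧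
    (∀ y, eC (ξ₁.i.gC y) = ξ₂.i.gC (lam • y)) ∧
    (∀ v, ξ₂.p.gA (eA v) = ξ₁.p.gA v) ∧ (∀ v, ξ₂.p.gB (eB v) = ξ₁.p.gB v) ∧
    (∀ v, ξ₂.p.gC (eC v) = ξ₁.p.gC v)

/-- The Yoneda extension group `Ext¹(X, Y)` in the category of nilpotent representations
(equivalence classes of short exact sequences `0 → Y → E → X → 0` with the Baer-sum
`ℂ`-vector space structure) is one-dimensional over `ℂ`: there is a nonzero class (a
non-split sequence), and any two nonzero classes are proportional by a nonzero scalar. -/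
def ExtOneDimensional3 (X Y : Rep3) : Prop :=
  (∃ ξ : SES3 Y X, ¬ ξ.IsSplit) ∧
    ∀ ξ₁ ξ₂ : SES3 Y X, ¬ ξ₁.IsSplit → ¬ ξ₂.IsSplit →
      ∃ lam : ℂ, lam ≠ 0 ∧ ScaledEquiv3 lam ξ₁ ξ₂


/-- The elementary map `(Fin 2 → ℂ) → (Fin 2 → ℂ)` sending the basis vector indexed `s` to
the one indexed `t` and killing the other basis vector. -/
def mapE (s t : Fin 2) : (Fin 2 → ℂ) →ₗ[ℂ] (Fin 2 → ℂ) where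
  toFun v j := if j = t then v s else 0
  map_add' u v := by
    funext j
    by_cases h : j = t <;> simp [h]
  map_smul' c v := by
    funext j
    by_cases h : j = t <;> simp [h]

lemma mapE_comp (s t s' t' : Fin 2) (h : s' ≠ t) : mapE s' t' ∘ₗ mapE s t = 0 := by
  apply LinearMap.ext
  intro v
  funext j
  simp [mapE, h]

/-- The string module `M(a₂b₁c₂a₁b₂)` for the path `a₂b₁c₂a₁b₂` (basis
`z₀ →a₂ z₁ →b₁ z₂ →c₂ z₃ →a₁ z₄ →b₂ z₅` with `z₀, z₃` in `V_A` (indices `0, 1`),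
`z₁, z₄` in `V_B` (indices `0, 1`), `z₂, z₅` in `V_C` (indices `0, 1`); each structure map
sends the indicated basis vector to the next one and kills all other basis vectors). -/
def Ma2b1c2a1b2 : Rep3 where
  VA := Fin 2 → ℂ
  VB := Fin 2 → ℂ
  VC := Fin 2 → ℂ
  fa1 := mapE 1 1
  fa2 := mapE 0 0
  fb1 := mapE 0 0
  fb2 := mapE 1 1
  fc1 := 0
  fc2 := mapE 0 1
  rel_ba1 := mapE_comp 1 1 0 0 (by decide)
  rel_cb1 := by simp
  rel_ac1 := by simp
  rel_ba2 := mapE_comp 0 0 1 1 (by decide)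
  rel_cb2 := mapE_comp 1 1 0 1 (by decide)
  rel_ac2 := mapE_comp 0 1 0 0 (by decide)

/-- The string module `M(a₁b₂c₁a₂b₁)` for the path `a₁b₂c₁a₂b₁` (basis
`z₀ →a₁ z₁ →b₂ z₂ →c₁ z₃ →a₂ z₄ →b₁ z₅` with `z₀, z₃` in `V_A`, `z₁, z₄` in `V_B`,
`z₂, z₅` in `V_C`). -/
def Ma1b2c1a2b1 : Rep3 where
  VA := Fin 2 → ℂ
  VB := Fin 2 → ℂ
  VC := Fin 2 → ℂ
  fa1 := mapE 0 0
  fa2 := mapE 1 1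
  fb1 := mapE 1 1
  fb2 := mapE 0 0
  fc1 := mapE 0 1
  fc2 := 0
  rel_ba1 := mapE_comp 0 0 1 1 (by decide)
  rel_cb1 := mapE_comp 1 1 0 1 (by decide)
  rel_ac1 := mapE_comp 0 1 0 0 (by decide)
  rel_ba2 := mapE_comp 1 1 0 0 (by decide)
  rel_cb2 := by simp
  rel_ac2 := by simp

/-- The string module `M(a₁b₂)`: `V_A = V_B = V_C = ℂ`, `f_{a₁} = f_{b₂} = id`, all other
maps zero. -/
def Ma1b2 : Rep3 where
  VA := ℂ
  VB := ℂ
  VC := ℂ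
  fa1 := LinearMap.id
  fa2 := 0
  fb1 := 0
  fb2 := LinearMap.id
  fc1 := 0
  fc2 := 0
  rel_ba1 := by simp
  rel_cb1 := by simp
  rel_ac1 := by simp
  rel_ba2 := by simp
  rel_cb2 := by simp
  rel_ac2 := by simp

/-- The string module `M(a₂b₁)`: `V_A = V_B = V_C = ℂ`, `f_{a₂} = f_{b₁} = id`, all other
maps zero. -/
def Ma2b1 : Rep3 where
  VA := ℂ
  VB := ℂ
  VC := ℂ
  fa1 := 0
  fa2 := LinearMap.id
  fb1 := LinearMap.id
  fb2 := 0
  fc1 := 0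
  fc2 := 0
  rel_ba1 := by simp
  rel_cb1 := by simp
  rel_ac1 := by simp
  rel_ba2 := by simp
  rel_cb2 := by simp
  rel_ac2 := by simp

/-!
Choosing linear sections of the projection of an extension of `X` by `Y` at every vertex, the
failure of these sections to commute with the arrows is a cochain; it determines the extension, and
rescaling `Y` rescales the cochain. For `X = M(a₂b₁)` and `Y = M(a₁b₂)`, lift the generator `z₀` of
`X` to `x` in the middle term. Since `a₁` acts surjectively on `Y`, one can arrange `a₁ x = 0`; then
`b₂ a₂ x = 0` and `c₁ b₁ a₂ x = 0` by the Jacobian relations, so on the lift `x, a₂ x, b₁ a₂ x` of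
the string `a₂b₁` only the arrow `c₂` can deviate. It maps `b₁ a₂ x` into `Y_A = ℂ`, which leaves
one scalar, zero only if the extension splits. Exchanging the indices `1` and `2` gives the other
direction.
-/

/-- The three vertices of the quiver. -/
inductive Vertex3 | A | B | C

namespace Arrow3

/-- The vertex at which an arrow starts. -/
def source : Arrow3 → Vertex3
  | .a1 | .a2 => .A
  | .b1 | .b2 => .B
  | .c1 | .c2 => .C

/-- The vertex at which an arrow ends. -/
def target : Arrow3 → Vertex3
  | .a1 | .a2 => .B
  | .b1 | .b2 => .C
  | .c1 | .c2 => .A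

/-- The involution of the quiver with potential exchanging the indices `1` and `2`. -/
def swap : Arrow3 → Arrow3
  | .a1 => .a2
  | .a2 => .a1
  | .b1 => .b2
  | .b2 => .b1
  | .c1 => .c2
  | .c2 => .c1

end Arrow3

namespace Rep3

/-- The space of a representation at a vertex, as a family over the vertices, so that statements
can be made once for all vertices. -/
def V (M : Rep3) : Vertex3 → Type
  | .A => M.VA
  | .B => M.VB
  | .C => M.VC

instance (M : Rep3) : ∀ v, AddCommGroup (M.V v)
  | .A => M.acgA
  | .B => M.acgB
  | .C => M.acgC

instance (M : Rep3) : ∀ v, Module ℂ (M.V v)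
  | .A => M.modA
  | .B => M.modB
  | .C => M.modC

/-- The structure map of a representation along an arrow, as a family over the arrows. -/
def map (M : Rep3) : ∀ a : Arrow3, M.V a.source →ₗ[ℂ] M.V a.target
  | .a1 => M.fa1
  | .a2 => M.fa2
  | .b1 => M.fb1
  | .b2 => M.fb2
  | .c1 => M.fc1
  | .c2 => M.fc2

/-- The representation with the roles of the indices `1` and `2` exchanged. -/
def swap (M : Rep3) : Rep3 where
  VA := M.VA
  VB := M.VB
  VC := M.VC
  fa1 := M.fa2
  fa2 := M.fa1
  fb1 := M.fb2
  fb2 := M.fb1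
  fc1 := M.fc2
  fc2 := M.fc1
  rel_ba1 := M.rel_ba2
  rel_cb1 := M.rel_cb2
  rel_ac1 := M.rel_ac2
  rel_ba2 := M.rel_ba1
  rel_cb2 := M.rel_cb1
  rel_ac2 := M.rel_ac1

theorem toEnd_swap (M : Rep3) : M.swap.toEnd = M.toEnd ∘ Arrow3.swap := by
  funext a
  cases a <;> rfl

theorem IsNilpotentRep.swap {M : Rep3} (h : M.IsNilpotentRep) : M.swap.IsNilpotentRep := by
  obtain ⟨N, hN⟩ := h
  refine ⟨N, fun l hl => ?_⟩
  have prod_eq_zero := hN (l.map Arrow3.swap) (by rwa [List.length_map])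
  rw [List.map_map] at prod_eq_zero
  rw [toEnd_swap]
  exact prod_eq_zero

theorem isNilpotentRep_of_strictly_triangular {M : Rep3} {N : ℕ} (coord : Fin N → M.Tot → ℂ)
    (separating : ∀ w, (∀ k, coord k w = 0) → w = 0)
    (triangular : ∀ a k w, (∀ j < k, coord j w = 0) → coord k (M.toEnd a w) = 0) :
    M.IsNilpotentRep := by
  have vanish (l : List Arrow3) (w : M.Tot) :
      ∀ k : Fin N, k < l.length → coord k ((l.map M.toEnd).prod w) = 0 := by
    induction l with
    | nil => simp
    | cons a l ih =>
      intro k hk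
      rw [List.map_cons, List.prod_cons]
      exact triangular a k _ fun j hj => ih j (by grind)
  exact ⟨N, fun l hl => LinearMap.ext fun w =>
    separating _ fun k => vanish l w k (hl ▸ k.isLt)⟩

end Rep3

namespace Hom3

variable {M N : Rep3}

/-- The components of a morphism, as a family over the vertices. -/
def app (g : Hom3 M N) : ∀ v, M.V v →ₗ[ℂ] N.V v
  | .A => g.gA
  | .B => g.gB
  | .C => g.gC

theorem app_map (g : Hom3 M N) : ∀ a x, g.app _ (M.map a x) = N.map a (g.app _ x)
  | .a1 => g.comm_a1
  | .a2 => g.comm_a2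
  | .b1 => g.comm_b1
  | .b2 => g.comm_b2
  | .c1 => g.comm_c1
  | .c2 => g.comm_c2

/-- The same morphism between the representations with the indices `1` and `2` exchanged. -/
def swap (g : Hom3 M N) : Hom3 M.swap N.swap where
  gA := g.gA
  gB := g.gB
  gC := g.gC
  comm_a1 := g.comm_a2
  comm_a2 := g.comm_a1
  comm_b1 := g.comm_b2
  comm_b2 := g.comm_b1
  comm_c1 := g.comm_c2
  comm_c2 := g.comm_c1

end Hom3

section LinearSections

variable {R Y V X Y' V' X' : Type*} [Ring R]
  [AddCommGroup Y] [Module R Y] [AddCommGroup V] [Module R V] [AddCommGroup X] [Module R X]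
  [AddCommGroup Y'] [Module R Y'] [AddCommGroup V'] [Module R V'] [AddCommGroup X'] [Module R X']
  {i : Y →ₗ[R] V} {p : V →ₗ[R] X} {s : X →ₗ[R] V}
  {i' : Y' →ₗ[R] V'} {p' : V' →ₗ[R] X'} {s' : X' →ₗ[R] V'}

theorem exists_linearEquiv_prod_of_section (hi : Function.Injective i) (hip : Function.Exact i p)
    (hs : p ∘ₗ s = .id) : ∃ e : (Y × X) ≃ₗ[R] V, ∀ y x, e (y, x) = i y + s x :=
  ⟨(hip.splitSurjectiveEquiv hi ⟨s, hs⟩).1.symm, fun _ _ => rfl⟩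

theorem exists_linearEquiv_of_sections (hi : Function.Injective i) (hip : Function.Exact i p)
    (hs : p ∘ₗ s = .id) (hi' : Function.Injective i') (hip' : Function.Exact i' p')
    (hs' : p' ∘ₗ s' = .id) (α : Y ≃ₗ[R] Y') (β : X ≃ₗ[R] X') :
    ∃ e : V ≃ₗ[R] V', ∀ y x, e (i y + s x) = i' (α y) + s' (β x) := by
  obtain ⟨θ, hθ⟩ := exists_linearEquiv_prod_of_section hi hip hs
  obtain ⟨θ', hθ'⟩ := exists_linearEquiv_prod_of_section hi' hip' hs'
  refine ⟨θ.symm ≪≫ₗ α.prodCongr β ≪≫ₗ θ', fun y x => ?_⟩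
  simp [← hθ, hθ']

end LinearSections

/-- A `1`-cochain on `X` with values in `Y`: a linear map `X_{s(a)} → Y_{t(a)}` for each arrow
`a`. Cochains record how far a linear section of an extension of `X` by `Y` is from being a
morphism; the cocycle condition imposed by the relations is not part of the definition. -/
abbrev Cochain3 (Y X : Rep3) : Type :=
  ∀ a : Arrow3, X.V a.source →ₗ[ℂ] Y.V a.target

namespace SES3

variable {Y X : Rep3} {ξ ξ₁ ξ₂ : SES3 Y X} {d : Cochain3 Y X}

theorem i_injective (ξ : SES3 Y X) : ∀ v, Function.Injective (ξ.i.app v)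
  | .A => ξ.injA
  | .B => ξ.injB
  | .C => ξ.injC

theorem p_surjective (ξ : SES3 Y X) : ∀ v, Function.Surjective (ξ.p.app v)
  | .A => ξ.surjA
  | .B => ξ.surjB
  | .C => ξ.surjC

theorem exact (ξ : SES3 Y X) : ∀ v, Function.Exact (ξ.i.app v) (ξ.p.app v)
  | .A => LinearMap.exact_iff.mpr ξ.exactA.symm
  | .B => LinearMap.exact_iff.mpr ξ.exactB.symm
  | .C => LinearMap.exact_iff.mpr ξ.exactC.symm

/-- The extension `ξ` is represented by the cochain `d`: at every vertex there is a linear section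
of the projection `E → X` such that `d` measures the failure of these sections to commute with the
structure maps. -/
def HasCocycle (ξ : SES3 Y X) (d : Cochain3 Y X) : Prop :=
  ∃ s : ∀ v, X.V v →ₗ[ℂ] ξ.E.V v, (∀ v, ξ.p.app v ∘ₗ s v = .id) ∧
    ∀ a x, ξ.E.map a (s _ x) = ξ.i.app _ (d a x) + s _ (X.map a x)

theorem exists_lift_map_eq_zero (ξ : SES3 Y X) {a : Arrow3} (hY : Function.Surjective (Y.map a))
    {x : X.V a.source} (hx : X.map a x = 0) :
    ∃ w, ξ.p.app a.source w = x ∧ ξ.E.map a w = 0 := by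
  obtain ⟨u, rfl⟩ := ξ.p_surjective _ x
  obtain ⟨y', hy'⟩ := (ξ.exact _ (ξ.E.map a u)).mp (by rw [Hom3.app_map, hx])
  obtain ⟨y, rfl⟩ := hY y'
  refine ⟨u - ξ.i.app _ y, ?_, ?_⟩
  · rw [map_sub, (ξ.exact _).apply_apply_eq_zero, sub_zero]
  · rw [map_sub, ← hy', Hom3.app_map, sub_self]

theorem map_i_add_section {s : ∀ v, X.V v →ₗ[ℂ] ξ.E.V v}
    (cocycle_s : ∀ a x, ξ.E.map a (s _ x) = ξ.i.app _ (d a x) + s _ (X.map a x)) (a y x) :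
    ξ.E.map a (ξ.i.app _ y + s _ x) = ξ.i.app _ (Y.map a y + d a x) + s _ (X.map a x) := by
  rw [map_add, cocycle_s, ← Hom3.app_map, ← add_assoc, ← map_add]

theorem HasCocycle.isSplit (h : ξ.HasCocycle 0) : ξ.IsSplit := by
  obtain ⟨s, section_s, cocycle_s⟩ := h
  have comm a x : s _ (X.map a x) = ξ.E.map a (s _ x) := by simp [cocycle_s]
  exact ⟨⟨s .A, s .B, s .C, comm .a1, comm .a2, comm .b1, comm .b2, comm .c1, comm .c2⟩,
    LinearMap.congr_fun (section_s .A), LinearMap.congr_fun (section_s .B),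
    LinearMap.congr_fun (section_s .C)⟩

theorem scaledEquiv3_of_app {lam : ℂ} (e : ∀ v, ξ₁.E.V v ≃ₗ[ℂ] ξ₂.E.V v)
    (comm : ∀ a w, e _ (ξ₁.E.map a w) = ξ₂.E.map a (e _ w))
    (e_i : ∀ v y, e v (ξ₁.i.app v y) = ξ₂.i.app v (lam • y))
    (p_e : ∀ v w, ξ₂.p.app v (e v w) = ξ₁.p.app v w) : ScaledEquiv3 lam ξ₁ ξ₂ :=
  ⟨e .A, e .B, e .C, comm .a1, comm .a2, comm .b1, comm .b2, comm .c1, comm .c2,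
    e_i .A, e_i .B, e_i .C, p_e .A, p_e .B, p_e .C⟩

theorem HasCocycle.scaledEquiv3 {lam : ℂ} (hlam : lam ≠ 0) (h₁ : ξ₁.HasCocycle d)
    (h₂ : ξ₂.HasCocycle (lam • d)) : ScaledEquiv3 lam ξ₁ ξ₂ := by
  obtain ⟨s₁, section_s₁, cocycle_s₁⟩ := h₁
  obtain ⟨s₂, section_s₂, cocycle_s₂⟩ := h₂
  choose e he using fun v => exists_linearEquiv_of_sections (ξ₁.i_injective v) (ξ₁.exact v)
    (section_s₁ v) (ξ₂.i_injective v) (ξ₂.exact v) (section_s₂ v)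
    (.smulOfNeZero ℂ (Y.V v) lam hlam) (.refl ℂ (X.V v))
  simp only [LinearEquiv.smulOfNeZero_apply, LinearEquiv.refl_apply] at he
  have decompose v (w : ξ₁.E.V v) : ∃ y x, ξ₁.i.app v y + s₁ v x = w := by
    obtain ⟨θ, hθ⟩ := exists_linearEquiv_prod_of_section (ξ₁.i_injective v) (ξ₁.exact v)
      (section_s₁ v)
    exact ⟨_, _, (hθ _ _).symm.trans (θ.apply_symm_apply w)⟩
  refine scaledEquiv3_of_app e (fun a w => ?_) (fun v y => ?_) (fun v w => ?_)
  · obtain ⟨y, x, rfl⟩ := decompose _ w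
    rw [map_i_add_section cocycle_s₁, he, he, map_i_add_section cocycle_s₂, (Y.map a).map_smul,
      smul_add, Pi.smul_apply, LinearMap.smul_apply]
  · simpa using he v y 0
  · obtain ⟨y, x, rfl⟩ := decompose v w
    have p_s₁ := LinearMap.congr_fun (section_s₁ v) x
    have p_s₂ := LinearMap.congr_fun (section_s₂ v) x
    rw [LinearMap.comp_apply] at p_s₁ p_s₂
    rw [he, map_add, map_add, (ξ₁.exact v).apply_apply_eq_zero, (ξ₂.exact v).apply_apply_eq_zero,
      p_s₁, p_s₂]

theorem extOneDimensional3_of_hasCocycle_smul (h : ∀ ξ : SES3 Y X, ∃ δ : ℂ, ξ.HasCocycle (δ • d))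
    (hξ : ¬ ξ.IsSplit) : ExtOneDimensional3 X Y := by
  refine ⟨⟨ξ, hξ⟩, fun ξ₁ ξ₂ hξ₁ hξ₂ => ?_⟩
  obtain ⟨δ₁, h₁⟩ := h ξ₁
  obtain ⟨δ₂, h₂⟩ := h ξ₂
  have δ₁_ne_zero : δ₁ ≠ 0 := by
    rintro rfl
    exact hξ₁ (HasCocycle.isSplit (by rwa [zero_smul] at h₁))
  have δ₂_ne_zero : δ₂ ≠ 0 := by
    rintro rfl
    exact hξ₂ (HasCocycle.isSplit (by rwa [zero_smul] at h₂))
  have ratio_ne_zero : δ₂ / δ₁ ≠ 0 := div_ne_zero δ₂_ne_zero δ₁_ne_zero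
  refine ⟨δ₂ / δ₁, ratio_ne_zero, h₁.scaledEquiv3 ratio_ne_zero ?_⟩
  rwa [smul_smul, div_mul_cancel₀ _ δ₁_ne_zero]

/-- The same short exact sequence with the indices `1` and `2` exchanged. -/
def swap (ξ : SES3 Y X) : SES3 Y.swap X.swap where
  E := ξ.E.swap
  nilE := ξ.nilE.swap
  i := ξ.i.swap
  p := ξ.p.swap
  injA := ξ.injA
  injB := ξ.injB
  injC := ξ.injC
  surjA := ξ.surjA
  surjB := ξ.surjB
  surjC := ξ.surjC
  exactA := ξ.exactA
  exactB := ξ.exactB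
  exactC := ξ.exactC

theorem isSplit_swap : ξ.swap.IsSplit ↔ ξ.IsSplit :=
  ⟨fun ⟨s, hs⟩ => ⟨s.swap, hs⟩, fun ⟨s, hs⟩ => ⟨s.swap, hs⟩⟩

end SES3

theorem ScaledEquiv3.swap {Y X : Rep3} {lam : ℂ} {ξ₁ ξ₂ : SES3 Y X} :
    ScaledEquiv3 lam ξ₁ ξ₂ → ScaledEquiv3 lam ξ₁.swap ξ₂.swap :=
  fun ⟨eA, eB, eC, ha1, ha2, hb1, hb2, hc1, hc2, h⟩ =>
    ⟨eA, eB, eC, ha2, ha1, hb2, hb1, hc2, hc1, h⟩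

theorem ScaledEquiv3.repIso3 {Y X : Rep3} {lam : ℂ} {ξ₁ ξ₂ : SES3 Y X} :
    ScaledEquiv3 lam ξ₁ ξ₂ → RepIso3 ξ₁.E ξ₂.E :=
  fun ⟨eA, eB, eC, ha1, ha2, hb1, hb2, hc1, hc2, _⟩ => ⟨eA, eB, eC, ha1, ha2, hb1, hb2, hc1, hc2⟩

namespace ExtOneDimensional3

variable {X Y : Rep3}

theorem repIso3 (h : ExtOneDimensional3 X Y) {ξ₁ ξ₂ : SES3 Y X} (h₁ : ¬ ξ₁.IsSplit)
    (h₂ : ¬ ξ₂.IsSplit) : RepIso3 ξ₁.E ξ₂.E :=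
  let ⟨_, _, h₁₂⟩ := h.2 ξ₁ ξ₂ h₁ h₂
  h₁₂.repIso3

theorem swap (h : ExtOneDimensional3 X Y) : ExtOneDimensional3 X.swap Y.swap := by
  obtain ⟨⟨ξ, hξ⟩, proportional⟩ := h
  refine ⟨⟨ξ.swap, SES3.isSplit_swap.not.mpr hξ⟩, fun ξ₁ ξ₂ h₁ h₂ => ?_⟩
  obtain ⟨lam, lam_ne_zero, h₁₂⟩ := proportional ξ₁.swap ξ₂.swap
    (SES3.isSplit_swap.not.mpr h₁) (SES3.isSplit_swap.not.mpr h₂)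
  exact ⟨lam, lam_ne_zero, h₁₂.swap⟩

end ExtOneDimensional3

theorem isNilpotentRep_Ma2b1c2a1b2 : Ma2b1c2a1b2.IsNilpotentRep := by
  -- The coordinates are listed in the order `z₀, …, z₅` of the string.
  let coord (k : Fin 6) (w : Ma2b1c2a1b2.Tot) : ℂ :=
    ![w.1 0, w.2.1 0, w.2.2 0, w.1 1, w.2.1 1, w.2.2 1] k
  have coord_toEnd a k w : coord k (Ma2b1c2a1b2.toEnd a w) = 0 ∨
      ∃ j < k, coord k (Ma2b1c2a1b2.toEnd a w) = coord j w := by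
    fin_cases k <;> cases a <;> first
      | exact .inl rfl
      | exact .inr ⟨_, Fin.sub_one_lt_iff.mpr (by decide), rfl⟩
  refine Rep3.isNilpotentRep_of_strictly_triangular coord (fun w hw => ?_) (fun a k w hw => ?_)
  · refine Prod.ext (funext fun j => ?_) (Prod.ext (funext fun j => ?_) (funext fun j => ?_)) <;>
      fin_cases j
    exacts [hw 0, hw 3, hw 1, hw 4, hw 2, hw 5]
  · obtain h | ⟨j, hj, h⟩ := coord_toEnd a k w
    exacts [h, h.trans (hw j hj)]

/-- The cochain supported on the arrow `c₂`, where it is the identity of `ℂ`. It joins the end of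
the string `a₂b₁` to the start of `a₁b₂`. -/
def connectingCochain : Cochain3 Ma1b2 Ma2b1
  | .c2 => (LinearMap.id : ℂ →ₗ[ℂ] ℂ)
  | .a1 | .a2 | .b1 | .b2 | .c1 => 0

/-- The linear maps from `M(a₂b₁)` to a representation sending the basis `z₀, z₁, z₂` of the string
to `x`, `a₂ x`, `b₁ a₂ x`; they need not commute with the other arrows. -/
def orbitMap (E : Rep3) (x : E.VA) : ∀ v, Ma2b1.V v →ₗ[ℂ] E.V v
  | .A => LinearMap.toSpanSingleton ℂ E.VA x
  | .B => LinearMap.toSpanSingleton ℂ E.VB (E.fa2 x)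
  | .C => LinearMap.toSpanSingleton ℂ E.VC (E.fb1 (E.fa2 x))

theorem app_comp_orbitMap {E : Rep3} (p : Hom3 E Ma2b1) {x : E.VA} (p_x : p.gA x = (1 : ℂ)) :
    ∀ v, p.app v ∘ₗ orbitMap E x v = .id := by
  have p_fa2_x : p.gB (E.fa2 x) = (1 : ℂ) := (p.comm_a2 x).trans p_x
  have p_fb1_fa2_x : p.gC (E.fb1 (E.fa2 x)) = (1 : ℂ) := (p.comm_b1 _).trans p_fa2_x
  rintro (_ | _ | _)
  exacts [LinearMap.ext_ring ((congrArg p.gA (one_smul ℂ _)).trans p_x),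
    LinearMap.ext_ring ((congrArg p.gB (one_smul ℂ _)).trans p_fa2_x),
    LinearMap.ext_ring ((congrArg p.gC (one_smul ℂ _)).trans p_fb1_fa2_x)]

theorem exists_hasCocycle_smul_connectingCochain (ξ : SES3 Ma1b2 Ma2b1) :
    ∃ δ : ℂ, ξ.HasCocycle (δ • connectingCochain) := by
  obtain ⟨x, p_x, fa1_x⟩ : ∃ x : ξ.E.VA, ξ.p.gA x = (1 : ℂ) ∧ ξ.E.fa1 x = 0 :=
    ξ.exists_lift_map_eq_zero (a := .a1) Function.surjective_id (x := (1 : ℂ)) rfl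
  have fb2_fa2_x : ξ.E.fb2 (ξ.E.fa2 x) = 0 := LinearMap.congr_fun ξ.E.rel_ba2 x
  have fc1_fb1_fa2_x : ξ.E.fc1 (ξ.E.fb1 (ξ.E.fa2 x)) = 0 := LinearMap.congr_fun ξ.E.rel_cb1 _
  obtain ⟨δ, hδ⟩ : ∃ δ : ℂ, ξ.i.gA δ = ξ.E.fc2 (ξ.E.fb1 (ξ.E.fa2 x)) :=
    (ξ.exact .A _).mp (ξ.p.comm_c2 _)
  refine ⟨δ, orbitMap ξ.E x, app_comp_orbitMap ξ.p p_x, ?_⟩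
  rintro (_ | _ | _ | _ | _ | _) (t : ℂ)
  case a1 =>
    change ξ.E.fa1 (t • x) = ξ.i.gB (δ • (0 : Ma1b2.VB)) + (0 : ℂ) • ξ.E.fa2 x
    simp [fa1_x]
  case a2 =>
    change ξ.E.fa2 (t • x) = ξ.i.gB (δ • (0 : Ma1b2.VB)) + t • ξ.E.fa2 x
    simp
  case b1 =>
    change ξ.E.fb1 (t • ξ.E.fa2 x) = ξ.i.gC (δ • (0 : Ma1b2.VC)) + t • ξ.E.fb1 (ξ.E.fa2 x)
    simp
  case b2 =>
    change ξ.E.fb2 (t • ξ.E.fa2 x) = ξ.i.gC (δ • (0 : Ma1b2.VC)) + (0 : ℂ) • ξ.E.fb1 (ξ.E.fa2 x)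
    simp [fb2_fa2_x]
  case c1 =>
    change ξ.E.fc1 (t • ξ.E.fb1 (ξ.E.fa2 x)) = ξ.i.gA (δ • (0 : Ma1b2.VA)) + (0 : ℂ) • x
    simp [fc1_fb1_fa2_x]
  case c2 =>
    have i_smul : ξ.i.gA (δ * t) = t • ξ.i.gA δ :=
      (congrArg ξ.i.gA (mul_comm δ t)).trans (ξ.i.gA.map_smul t δ)
    change ξ.E.fc2 (t • ξ.E.fb1 (ξ.E.fa2 x)) = ξ.i.gA (δ * t) + (0 : ℂ) • x
    rw [map_smul, ← hδ, i_smul, zero_smul, add_zero]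

theorem mapE_single (s t k : Fin 2) (x : ℂ) :
    mapE s t (Pi.single k x) = if s = k then Pi.single t x else 0 := by
  ext j
  by_cases hs : s = k <;> by_cases hj : j = t <;> simp [mapE, hs, hj]

theorem range_single_one_eq_ker_proj_zero (R M : Type*) [Semiring R] [AddCommMonoid M]
    [Module R M] :
    LinearMap.range (LinearMap.single R (fun _ : Fin 2 => M) 1) =
      LinearMap.ker (LinearMap.proj 0) := by
  ext v
  refine ⟨?_, fun hv => ⟨v 1, funext fun j => ?_⟩⟩
  · rintro ⟨x, rfl⟩
    rfl
  · fin_cases j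
    exacts [hv.symm, rfl]

/-- The sequence `0 → M(a₁b₂) → M(a₂b₁c₂a₁b₂) → M(a₂b₁) → 0`: the substring `a₁b₂` spans
`z₃, z₄, z₅`, and the quotient string `a₂b₁` is the image of `z₀, z₁, z₂`. -/
def sesMa2b1c2a1b2 : SES3 Ma1b2 Ma2b1 where
  E := Ma2b1c2a1b2
  nilE := isNilpotentRep_Ma2b1c2a1b2
  i :=
    { gA := LinearMap.single ℂ (fun _ : Fin 2 => ℂ) 1
      gB := LinearMap.single ℂ (fun _ : Fin 2 => ℂ) 1
      gC := LinearMap.single ℂ (fun _ : Fin 2 => ℂ) 1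
      comm_a1 := fun x => (mapE_single 1 1 1 x).symm
      comm_a2 := fun x => (map_zero _).trans (mapE_single 0 0 1 x).symm
      comm_b1 := fun x => (map_zero _).trans (mapE_single 0 0 1 x).symm
      comm_b2 := fun x => (mapE_single 1 1 1 x).symm
      comm_c1 := fun _ => map_zero _
      comm_c2 := fun x => (map_zero _).trans (mapE_single 0 1 1 x).symm }
  p :=
    { gA := LinearMap.proj (φ := fun _ : Fin 2 => ℂ) 0
      gB := LinearMap.proj (φ := fun _ : Fin 2 => ℂ) 0
      gC := LinearMap.proj (φ := fun _ : Fin 2 => ℂ) 0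
      comm_a1 := fun _ => rfl
      comm_a2 := fun _ => rfl
      comm_b1 := fun _ => rfl
      comm_b2 := fun _ => rfl
      comm_c1 := fun _ => rfl
      comm_c2 := fun _ => rfl }
  injA := Pi.single_injective (M := fun _ : Fin 2 => ℂ) 1
  injB := Pi.single_injective (M := fun _ : Fin 2 => ℂ) 1
  injC := Pi.single_injective (M := fun _ : Fin 2 => ℂ) 1
  surjA := Function.surjective_eval 0
  surjB := Function.surjective_eval 0
  surjC := Function.surjective_eval 0
  exactA := range_single_one_eq_ker_proj_zero ℂ ℂ
  exactB := range_single_one_eq_ker_proj_zero ℂ ℂ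
  exactC := range_single_one_eq_ker_proj_zero ℂ ℂ

theorem not_isSplit_sesMa2b1c2a1b2 : ¬ sesMa2b1c2a1b2.IsSplit := by
  rintro ⟨s, -, -, proj_s⟩
  let w : Fin 2 → ℂ := s.gC (1 : ℂ)
  have w_zero_eq_one : w 0 = 1 := proj_s (1 : ℂ)
  have mapE_w : mapE 0 1 w = 0 := (s.comm_c2 (1 : ℂ)).symm.trans (map_zero s.gA)
  have w_zero_eq_zero : w 0 = 0 := congrFun mapE_w 1
  exact one_ne_zero (w_zero_eq_one.symm.trans w_zero_eq_zero)

/-- In the category of nilpotent representations of `(Q, W)`: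
there is a non-split short exact sequence
`0 → M(a₁b₂) → M(a₂b₁c₂a₁b₂) → M(a₂b₁) → 0` and a non-split short exact sequence
`0 → M(a₂b₁) → M(a₁b₂c₁a₂b₁) → M(a₁b₂) → 0`; the Yoneda extension groups
`Ext¹(M(a₂b₁), M(a₁b₂))` and `Ext¹(M(a₁b₂), M(a₂b₁))` are each one-dimensional over `ℂ`;
and consequently every non-split extension in either direction has middle term isomorphic
to the displayed string module. -/
theorem extensions_of_Ma1b2_Ma2b1 :
    (∃ ξ : SES3 Ma1b2 Ma2b1, ¬ ξ.IsSplit ∧ RepIso3 ξ.E Ma2b1c2a1b2) ∧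
    (∃ ξ : SES3 Ma2b1 Ma1b2, ¬ ξ.IsSplit ∧ RepIso3 ξ.E Ma1b2c1a2b1) ∧
    ExtOneDimensional3 Ma2b1 Ma1b2 ∧
    ExtOneDimensional3 Ma1b2 Ma2b1 ∧
    (∀ ξ : SES3 Ma1b2 Ma2b1, ¬ ξ.IsSplit → RepIso3 ξ.E Ma2b1c2a1b2) ∧
    (∀ ξ : SES3 Ma2b1 Ma1b2, ¬ ξ.IsSplit → RepIso3 ξ.E Ma1b2c1a2b1) := by
  have ext₁ : ExtOneDimensional3 Ma2b1 Ma1b2 :=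
    SES3.extOneDimensional3_of_hasCocycle_smul exists_hasCocycle_smul_connectingCochain
      not_isSplit_sesMa2b1c2a1b2
  -- By `rfl`, `swap` exchanges `Ma2b1` with `Ma1b2` and `Ma2b1c2a1b2` with `Ma1b2c1a2b1`.
  have ext₂ : ExtOneDimensional3 Ma1b2 Ma2b1 := ext₁.swap
  have not_isSplit_swap : ¬ sesMa2b1c2a1b2.swap.IsSplit :=
    SES3.isSplit_swap.not.mpr not_isSplit_sesMa2b1c2a1b2
  have middle₁ (ξ : SES3 Ma1b2 Ma2b1) (hξ : ¬ ξ.IsSplit) : RepIso3 ξ.E Ma2b1c2a1b2 :=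
    ext₁.repIso3 hξ not_isSplit_sesMa2b1c2a1b2
  have middle₂ (ξ : SES3 Ma2b1 Ma1b2) (hξ : ¬ ξ.IsSplit) : RepIso3 ξ.E Ma1b2c1a2b1 :=
    ext₂.repIso3 hξ not_isSplit_swap
  exact ⟨⟨_, not_isSplit_sesMa2b1c2a1b2, middle₁ _ not_isSplit_sesMa2b1c2a1b2⟩,
    ⟨_, not_isSplit_swap, middle₂ _ not_isSplit_swap⟩, ext₁, ext₂, middle₁, middle₂⟩
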